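/- arXiv:1607.03058 — 4 statements merged into one kernel-verified Lean document; each statement's English description precedes it below -/
import Mathlib

section
/- Let n ≥ 1 and let A be an invertible n×n integer matrix having no root-of-unity eigenvalue. Then every subgroup of finite index in ℤⁿ ⋊_A ℤ has trivial center; in particular the center of ℤⁿ ⋊_A ℤ itself is trivial. -/
/-- The multiplicative automorphism of `Multiplicative (Fin n → ℤ)` determined by an
invertible integer matrix `A`, acting by `v ↦ A v`. -/
noncomputable def glMulAut {n : ℕ} (A : GL (Fin n) ℤ) : MulAut (Multiplicative (Fin n → ℤ)) :=
  AddEquiv.toMultiplicative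
    ((Matrix.GeneralLinearGroup.toLin A).toLinearEquiv.toAddEquiv)

/-- The action of `ℤ` on `ℤⁿ = Fin n → ℤ` sending `k` to the `k`-th power of the
automorphism determined by `A`. -/
noncomputable def glZAction {n : ℕ} (A : GL (Fin n) ℤ) :
    Multiplicative ℤ →* MulAut (Multiplicative (Fin n → ℤ)) :=
  zpowersHom _ (glMulAut A)

/-- The semidirect product `ℤⁿ ⋊_A ℤ`. -/
noncomputable abbrev ZSemidirect {n : ℕ} (A : GL (Fin n) ℤ) : Type :=
  SemidirectProduct (Multiplicative (Fin n → ℤ)) (Multiplicative ℤ) (glZAction A)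

/-- `A` has no root-of-unity eigenvalue: `det (Aᵏ − 1) ≠ 0` for every integer `k ≥ 1`. -/
def NoRootOfUnityEigenvalue {n : ℕ} (A : GL (Fin n) ℤ) : Prop :=
  ∀ k : ℤ, 1 ≤ k → (((A ^ k : GL (Fin n) ℤ) : Matrix (Fin n) (Fin n) ℤ) - 1).det ≠ 0

/-!
An element `(a, g)` of `N ⋊[φ] G` commuting with `h ∈ G` satisfies `φ h a = a`, and once `a = 1` it
commutes with `x ∈ N` only if `φ g x = x`. If no nontrivial element of `G` fixes a nontrivial
element of `N`, a single `h ≠ 1` therefore forces `a = 1`, and then a single `x ≠ 1` forces `g = 1`.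
When `N` and `G` are infinite, every subgroup of finite index contains such an `h` and such an `x`.
For `ℤⁿ ⋊_A ℤ`, a nonzero vector fixed by `Aᵏ` would lie in the kernel of `Aᵏ - 1`.
-/

open MonoidHom (FixedPointFree)
open SemidirectProduct (inl inr)

section FiniteIndexSubgroups

variable {G G' : Type*} [Group G] [Group G']

theorem center_eq_bot_of_centralizer_eq_bot {K : Subgroup G}
    (hK : Subgroup.centralizer (K : Set G) = ⊥) : Subgroup.center K = ⊥ := by
  refine (Subgroup.eq_bot_iff_forall _).mpr fun z hz => Subtype.ext ?_
  have hzK : (z : G) ∈ Subgroup.centralizer (K : Set G) := fun g hg =>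
    congrArg Subtype.val (Subgroup.mem_center_iff.mp hz ⟨g, hg⟩)
  rwa [hK] at hzK

theorem exists_ne_one_map_mem_of_index_ne_zero [Infinite G] (f : G →* G') {K : Subgroup G'}
    (hK : K.index ≠ 0) : ∃ g : G, g ≠ 1 ∧ f g ∈ K := by
  have hindex : (K.comap f).index ≠ 0 := by
    rw [Subgroup.index_comap]
    exact mt Subgroup.index_eq_zero_of_relIndex_eq_zero hK
  have hne : K.comap f ≠ ⊥ := fun hbot =>
    hindex (by rw [hbot, Subgroup.index_bot, Nat.card_eq_zero_of_infinite])
  obtain ⟨g, hg, hg1⟩ := (K.comap f).bot_or_exists_ne_one.resolve_left hne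
  exact ⟨g, hg1, hg⟩

end FiniteIndexSubgroups

section FixedPointFreeAction

variable {N G : Type*} [Group N] [Group G]

/-- The action `φ` of `G` on `N` is fixed-point-free (Frobenius): an automorphism `φ g` with
`g ≠ 1` has no fixed point other than `1`. No finiteness or nontriviality
of `N` and `G` is built in. -/
def FixedPointFreeAction (φ : G →* MulAut N) : Prop :=
  ∀ g, g ≠ 1 → FixedPointFree (φ g)

variable {φ : G →* MulAut N}

theorem apply_left_eq_left_of_commute_inr {z : N ⋊[φ] G} {h : G} (hz : Commute z (inr h)) :
    φ h z.left = z.left := by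
  simpa using (congrArg SemidirectProduct.left hz.eq).symm

theorem commute_inr_inl_iff {g : G} {x : N} :
    Commute (inr g : N ⋊[φ] G) (inl x) ↔ φ g x = x := by
  simp [commute_iff_eq, SemidirectProduct.ext_iff]

theorem FixedPointFreeAction.eq_one_of_commute (hφ : FixedPointFreeAction φ) {z : N ⋊[φ] G}
    {h : G} (hh : h ≠ 1) (hzh : Commute z (inr h)) {x : N} (hx : x ≠ 1)
    (hzx : Commute z (inl x)) : z = 1 := by
  have hleft : z.left = 1 := hφ h hh _ (apply_left_eq_left_of_commute_inr hzh)
  obtain ⟨g, rfl⟩ : ∃ g, z = inr g := ⟨z.right, SemidirectProduct.ext hleft rfl⟩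
  have hg : g = 1 := by
    by_contra hg
    exact hx (hφ g hg x (commute_inr_inl_iff.mp hzx))
  rw [hg, map_one]

theorem stmt2_general [Infinite N] [Infinite G] (hφ : FixedPointFreeAction φ)
    {K : Subgroup (N ⋊[φ] G)} (hK : K.index ≠ 0) :
    Subgroup.centralizer (K : Set (N ⋊[φ] G)) = ⊥ := by
  obtain ⟨h, hh, hhK⟩ := exists_ne_one_map_mem_of_index_ne_zero (inr : G →* N ⋊[φ] G) hK
  obtain ⟨x, hx, hxK⟩ := exists_ne_one_map_mem_of_index_ne_zero (inl : N →* N ⋊[φ] G) hK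
  exact (Subgroup.eq_bot_iff_forall _).mpr fun z hz =>
    hφ.eq_one_of_commute hh (hz _ hhK).symm hx (hz _ hxK).symm

theorem fixedPointFree_inv_iff {σ : MulAut N} :
    FixedPointFree (σ⁻¹ : MulAut N) ↔ FixedPointFree σ :=
  forall_congr' fun _ => imp_congr_left (σ.symm_apply_eq.trans eq_comm)

theorem fixedPointFreeAction_zpowersHom {σ : MulAut N}
    (hσ : ∀ k : ℕ, k ≠ 0 → FixedPointFree (σ ^ k : MulAut N)) :
    FixedPointFreeAction (zpowersHom (MulAut N) σ) := by
  intro g hg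
  obtain ⟨k, hk⟩ := g.toAdd.eq_nat_or_neg
  have hk0 : k ≠ 0 := by
    rintro rfl
    exact hg (by simpa using hk)
  rw [zpowersHom_apply]
  obtain hpos | hneg := hk
  · rw [hpos, zpow_natCast]
    exact hσ k hk0
  · rw [hneg, zpow_neg, zpow_natCast, fixedPointFree_inv_iff]
    exact hσ k hk0

end FixedPointFreeAction

section Matrix

open Matrix

theorem eq_zero_of_mulVec_eq_self {m R : Type*} [Fintype m] [DecidableEq m] [CommRing R]
    [IsDomain R] {M : Matrix m m R} (hM : (M - 1).det ≠ 0) {v : m → R} (hv : M *ᵥ v = v) :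
    v = 0 :=
  Matrix.eq_zero_of_mulVec_eq_zero hM (by rw [sub_mulVec, hv, one_mulVec, sub_self])

variable {n : ℕ} {A : GL (Fin n) ℤ}

theorem glMulAut_pow_apply (k : ℕ) (v : Multiplicative (Fin n → ℤ)) :
    (glMulAut A ^ k) v = .ofAdd ((A : Matrix (Fin n) (Fin n) ℤ) ^ k *ᵥ v.toAdd) := by
  induction k with
  | zero => simp
  | succ k ih =>
    rw [pow_succ', pow_succ', MulAut.mul_apply, ih, ← mulVec_mulVec]
    rfl

theorem NoRootOfUnityEigenvalue.fixedPointFree_glMulAut_pow (hA : NoRootOfUnityEigenvalue A)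
    {k : ℕ} (hk : k ≠ 0) : FixedPointFree (glMulAut A ^ k : MulAut _) := by
  intro v hv
  have hdet : ((A : Matrix (Fin n) (Fin n) ℤ) ^ k - 1).det ≠ 0 := by
    simpa using hA k (by omega)
  rw [glMulAut_pow_apply] at hv
  exact eq_zero_of_mulVec_eq_self hdet hv

theorem NoRootOfUnityEigenvalue.fixedPointFreeAction (hA : NoRootOfUnityEigenvalue A) :
    FixedPointFreeAction (glZAction A) :=
  fixedPointFreeAction_zpowersHom fun _ => hA.fixedPointFree_glMulAut_pow

end Matrix

/-- Every finite-index subgroup of `ℤⁿ ⋊_A ℤ` has trivial center when `A` has no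
root-of-unity eigenvalue; in particular the center of `ℤⁿ ⋊_A ℤ` itself is trivial. -/
theorem stmt2 {n : ℕ} (hn : 1 ≤ n) (A : GL (Fin n) ℤ)
    (hA : NoRootOfUnityEigenvalue A) :
    (∀ K : Subgroup (ZSemidirect A), K.index ≠ 0 → Subgroup.center K = ⊥) ∧
      Subgroup.center (ZSemidirect A) = ⊥ := by
  have : Nonempty (Fin n) := Fin.pos_iff_nonempty.mp hn
  have hφ := hA.fixedPointFreeAction
  exact ⟨fun K hK => center_eq_bot_of_centralizer_eq_bot (stmt2_general hφ hK),
    eq_bot_iff.mpr ((Subgroup.center_le_centralizer _).trans_eq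
      (stmt2_general hφ (K := ⊤) (by simp)))⟩
end

section
/- For every n ≥ 1 and every invertible n×n integer matrix A, the abelianization of ℤⁿ ⋊_A ℤ is isomorphic to the product ((Fin n → ℤ) ⧸ range(A − 1)) × ℤ, where A − 1 is regarded as a ℤ-linear endomorphism of ℤⁿ = (Fin n → ℤ) and range(A − 1) is its image. -/
/-!
A homomorphism from `N ⋊[φ] G` to a commutative group is a homomorphism on `N` that does not see the
action, together with an arbitrary homomorphism on `G`. Hence `(N ⋊[φ] G)ᵃᵇ ≃ (N_G)ᵃᵇ × Gᵃᵇ`, where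
the coinvariants `N_G` are the largest quotient of `N` on which `G` acts trivially. When `N` is
commutative and `G` is infinite cyclic with a generator acting by `a`, triviality for `a` forces
triviality for all its powers, so only the elements `a v / v` have to be killed; they already form
a subgroup.
-/

section Coinvariants

variable {N G H : Type*} [Group N] [Group G] [Group H] (φ : G →* MulAut N)

/-- The kernel of the projection from `N` to its coinvariants: the normal subgroup generated by the
elements `φ g v / v`, often written `[G, N]`. -/
def GroupCoinvariants.ker : Subgroup N :=
  Subgroup.normalClosure (Set.range fun p : G × N => φ p.1 p.2 / p.2)

instance GroupCoinvariants.ker_normal : (GroupCoinvariants.ker φ).Normal :=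
  Subgroup.normalClosure_normal

/-- The coinvariants `N_G` of an action of `G` on a (possibly noncommutative) group `N`: the largest
quotient of `N` on which `G` acts trivially. -/
abbrev GroupCoinvariants : Type _ := N ⧸ GroupCoinvariants.ker φ

namespace GroupCoinvariants

theorem div_mem_ker (g : G) (v : N) : φ g v / v ∈ ker φ :=
  Subgroup.subset_normalClosure ⟨(g, v), rfl⟩

theorem mk_aut (g : G) (v : N) : ((φ g v : N) : GroupCoinvariants φ) = v :=
  QuotientGroup.eq_iff_div_mem.mpr (div_mem_ker φ g v)

variable {φ}

theorem ker_le_ker_of_invariant {f : N →* H} (hf : ∀ g v, f (φ g v) = f v) : ker φ ≤ f.ker := by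
  refine Subgroup.normalClosure_le_normal ?_
  rintro _ ⟨⟨g, v⟩, rfl⟩
  exact (MonoidHom.div_mem_ker_iff f).mpr (hf g v)

end GroupCoinvariants

end Coinvariants

section Abelianization

open SemidirectProduct

variable {N G : Type*} [Group N] [Group G] (φ : G →* MulAut N)

theorem abelianization_of_inl_aut (g : G) (v : N) :
    Abelianization.of (inl (φ g v) : N ⋊[φ] G) = Abelianization.of (inl v) := by
  rw [inl_aut, map_mul, map_mul, map_inv, map_inv, mul_inv_cancel_comm]

/-- The canonical map `(N ⋊[φ] G)ᵃᵇ → (N_G)ᵃᵇ × Gᵃᵇ`. -/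
def abelianizationSemidirectToProd :
    Abelianization (N ⋊[φ] G) →* Abelianization (GroupCoinvariants φ) × Abelianization G :=
  Abelianization.lift <| SemidirectProduct.lift
    ((MonoidHom.inl _ _).comp (Abelianization.of.comp (QuotientGroup.mk' _)))
    ((MonoidHom.inr _ _).comp Abelianization.of) fun g => by
      ext v : 1
      simp [GroupCoinvariants.mk_aut]

/-- The map `(N_G)ᵃᵇ × Gᵃᵇ → (N ⋊[φ] G)ᵃᵇ` induced by the inclusions of the two factors. -/
def prodToAbelianizationSemidirect :
    Abelianization (GroupCoinvariants φ) × Abelianization G →* Abelianization (N ⋊[φ] G) :=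
  (Abelianization.lift <| QuotientGroup.lift _ (Abelianization.of.comp inl) <|
      GroupCoinvariants.ker_le_ker_of_invariant (abelianization_of_inl_aut φ)).coprod
    (Abelianization.map inr)

/-- The abelianization of a semidirect product is `(N_G)ᵃᵇ × Gᵃᵇ`. -/
def abelianizationSemidirectEquiv :
    Abelianization (N ⋊[φ] G) ≃* Abelianization (GroupCoinvariants φ) × Abelianization G :=
  MonoidHom.toMulEquiv (abelianizationSemidirectToProd φ) (prodToAbelianizationSemidirect φ)
    (Abelianization.hom_ext _ _ <| SemidirectProduct.hom_ext
      (by ext; simp [abelianizationSemidirectToProd, prodToAbelianizationSemidirect])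
      (by ext; simp [abelianizationSemidirectToProd, prodToAbelianizationSemidirect]))
    (by
      rw [prodToAbelianizationSemidirect, MonoidHom.comp_coprod, ← MonoidHom.coprod_inl_inr]
      congr 1 <;> ext <;> simp [abelianizationSemidirectToProd])

end Abelianization

section Cyclic

theorem apply_zpow_mulAut_of_invariant {N X : Type*} [Mul N] {f : N → X} {a : MulAut N}
    (h : ∀ v, f (a v) = f v) (k : ℤ) (v : N) : f ((a ^ k) v) = f v := by
  induction k generalizing v with
  | zero => simp
  | succ k ih => rw [zpow_add_one, MulAut.mul_apply, ih, h]
  | pred k ih => rw [zpow_sub_one, MulAut.mul_apply, ih, ← h, MulAut.apply_inv_self]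

theorem GroupCoinvariants.ker_zpowersHom {N : Type*} [CommGroup N] (a : MulAut N) :
    ker (zpowersHom _ a) = ((a : N →* N) / MonoidHom.id N).range := by
  set R := ((a : N →* N) / MonoidHom.id N).range
  apply le_antisymm
  · have hR : ∀ v, QuotientGroup.mk' R (a v) = QuotientGroup.mk' R v := fun v =>
      QuotientGroup.eq_iff_div_mem.mpr ⟨v, rfl⟩
    rw [← QuotientGroup.ker_mk' R]
    exact ker_le_ker_of_invariant fun k => apply_zpow_mulAut_of_invariant hR k.toAdd
  · rintro _ ⟨v, rfl⟩
    simpa using div_mem_ker (zpowersHom _ a) (Multiplicative.ofAdd 1) v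

variable {R M : Type*} [Ring R] [AddCommGroup M] [Module R M] (e : M ≃ₗ[R] M)

/-- The projection of a module `M` onto the cokernel of `e - 1`, written multiplicatively so that
its kernel can be compared with `GroupCoinvariants.ker`. -/
def mkCokerSubId :
    Multiplicative M →* Multiplicative (M ⧸ LinearMap.range ((e : M →ₗ[R] M) - LinearMap.id)) :=
  AddMonoidHom.toMultiplicative (Submodule.mkQ _).toAddMonoidHom

theorem mkCokerSubId_surjective : Function.Surjective (mkCokerSubId e) :=
  fun x => Submodule.Quotient.mk_surjective _ x.toAdd

theorem ker_mkCokerSubId :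
    (mkCokerSubId e).ker =
      GroupCoinvariants.ker (zpowersHom _ (AddEquiv.toMultiplicative e.toAddEquiv)) := by
  rw [GroupCoinvariants.ker_zpowersHom]
  ext v
  exact Submodule.Quotient.mk_eq_zero _

/-- The coinvariants of the action of `ℤ` on a module through the powers of `e`, as the cokernel of
`e - 1`. -/
noncomputable def coinvariantsZpowersEquiv :
    GroupCoinvariants (zpowersHom _ (AddEquiv.toMultiplicative e.toAddEquiv)) ≃*
      Multiplicative (M ⧸ LinearMap.range ((e : M →ₗ[R] M) - LinearMap.id)) :=
  (QuotientGroup.quotientMulEquivOfEq (ker_mkCokerSubId e).symm).trans <|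
    QuotientGroup.quotientKerEquivOfSurjective _ (mkCokerSubId_surjective e)

end Cyclic

theorem stmt5_general {R M : Type*} [Ring R] [AddCommGroup M] [Module R M] (e : M ≃ₗ[R] M) :
    Nonempty (Abelianization (Multiplicative M
        ⋊[zpowersHom _ (AddEquiv.toMultiplicative e.toAddEquiv)] Multiplicative ℤ) ≃*
      Multiplicative ((M ⧸ LinearMap.range ((e : M →ₗ[R] M) - LinearMap.id)) × ℤ)) :=
  ⟨(abelianizationSemidirectEquiv _).trans <|
    (Abelianization.equivOfComm.symm.prodCongr Abelianization.equivOfComm.symm).trans <|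
    ((coinvariantsZpowersEquiv e).prodCongr (MulEquiv.refl _)).trans
    (MulEquiv.prodMultiplicative _ _).symm⟩

/-- The abelianization of `ℤⁿ ⋊_A ℤ` is isomorphic to `(ℤⁿ ⧸ im (A − 1)) × ℤ`,
where `A − 1` is viewed as a `ℤ`-linear endomorphism of `ℤⁿ = Fin n → ℤ`. -/
theorem stmt5 {n : ℕ} (hn : 1 ≤ n) (A : GL (Fin n) ℤ) :
    Nonempty (Abelianization (ZSemidirect A) ≃*
      Multiplicative
        (((Fin n → ℤ) ⧸
            LinearMap.range
              (Matrix.toLin' ((A : Matrix (Fin n) (Fin n) ℤ) - 1))) × ℤ)) := by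
  rw [map_sub, Matrix.toLin'_one]
  exact stmt5_general (Matrix.GeneralLinearGroup.toLin A).toLinearEquiv
end

section
/- Let G be a group and let z be an element of infinite order lying in the center of G, such that the quotient group G ⧸ Subgroup.zpowers z is isomorphic to ℤ × ℤ. Then for every natural number p ≥ 2, there is no group homomorphism φ : G → FreeGroup (Fin p) whose range is a subgroup of finite index in FreeGroup (Fin p). -/
/-!
The range of a homomorphism from a solvable group to a free group is solvable, and free by the
Nielsen–Schreier theorem. A free group on at least two generators maps onto the symmetric group on
five letters, so a solvable free group is cyclic. But a cyclic subgroup of a free group of rank at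
least two has infinite index: otherwise every nontrivial homomorphism to a torsion-free group would
have a torsion kernel, whereas killing all generators but one is nontrivial, and its kernel contains
the other generators.
-/

section FreeGroup

variable {α : Type*} [Nontrivial α]

theorem exists_surjective_freeGroup_of_closure_pair_eq_top {G : Type*} [Group G] {x y : G}
    (hxy : Subgroup.closure {x, y} = ⊤) :
    ∃ f : FreeGroup α →* G, Function.Surjective f := by
  classical
  obtain ⟨i, j, hij⟩ := exists_pair_ne α
  let g : α → G := fun k => if k = i then x else y
  refine ⟨FreeGroup.lift g, MonoidHom.range_eq_top.1 (top_unique ?_)⟩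
  rw [← hxy, FreeGroup.range_lift_eq_closure]
  exact Subgroup.closure_mono (Set.pair_subset ⟨i, if_pos rfl⟩ ⟨j, if_neg hij.symm⟩)

theorem not_isSolvable_freeGroup : ¬ Group.IsSolvable (FreeGroup α) := by
  intro _
  obtain ⟨f, hf⟩ := exists_surjective_freeGroup_of_closure_pair_eq_top (α := α)
    (Equiv.Perm.closure_cycle_adjacent_swap (isCycle_finRotate (n := 3)) support_finRotate 0)
  exact Equiv.Perm.not_isSolvable_fin_5 (Group.isSolvable_of_surjective hf)

end FreeGroup

theorem isCyclic_freeGroup_of_subsingleton (α : Type*) [Subsingleton α] :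
    IsCyclic (FreeGroup α) := by
  cases isEmpty_or_nonempty α
  · infer_instance
  · obtain ⟨_⟩ := (unique_iff_subsingleton_and_nonempty α).2 ⟨‹_›, ‹_›⟩
    infer_instance

theorem isCyclic_of_isFreeGroup_of_isSolvable (G : Type*) [Group G] [IsFreeGroup G]
    [Group.IsSolvable G] : IsCyclic G := by
  let e : G ≃* FreeGroup (IsFreeGroup.Generators G) := IsFreeGroup.toFreeGroup G
  have : Group.IsSolvable (FreeGroup (IsFreeGroup.Generators G)) :=
    Group.isSolvable_of_surjective (f := e.toMonoidHom) e.surjective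
  cases subsingleton_or_nontrivial (IsFreeGroup.Generators G)
  · exact e.isCyclic.2 (isCyclic_freeGroup_of_subsingleton _)
  · exact absurd ‹_› not_isSolvable_freeGroup

theorem isOfFinOrder_of_map_eq_one_of_isCyclic_of_index_ne_zero {G A : Type*} [Group G] [Group A]
    [IsMulTorsionFree A] {H : Subgroup G} [IsCyclic H] (hH : H.index ≠ 0) {f : G →* A}
    (hf : f ≠ 1) {x : G} (hx : f x = 1) : IsOfFinOrder x := by
  obtain ⟨y, hy⟩ : ∃ y, f y ≠ 1 := by
    contrapose! hf
    exact MonoidHom.ext hf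
  obtain ⟨c, rfl⟩ := (Subgroup.isCyclic_iff_exists_zpowers_eq_top H).1 ‹_›
  obtain ⟨m, hm, -, k, hk : c ^ k = y ^ m⟩ := Subgroup.exists_pow_mem_of_index_ne_zero hH y
  obtain ⟨n, hn, -, l, hl : c ^ l = x ^ n⟩ := Subgroup.exists_pow_mem_of_index_ne_zero hH x
  have hfc : f c ≠ 1 := by
    intro hfc
    have : f y ^ m = 1 := by rw [← map_pow, ← hk, map_zpow, hfc, one_zpow]
    exact hy ((pow_eq_one_iff_left hm.ne').1 this)
  have hfcl : f c ^ l = 1 := by rw [← map_zpow, hl, map_pow, hx, one_pow]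
  have hl0 : l = 0 := (IsMulTorsionFree.zpow_eq_one_iff_right hfc).1 hfcl
  exact isOfFinOrder_iff_pow_eq_one.2 ⟨n, hn, by rw [← hl, hl0, zpow_zero]⟩

theorem index_eq_zero_of_isCyclic_subgroup_freeGroup {α : Type*} [Nontrivial α]
    (H : Subgroup (FreeGroup α)) [IsCyclic H] : H.index = 0 := by
  classical
  by_contra hH
  obtain ⟨i, j, hij⟩ := exists_pair_ne α
  let f : FreeGroup α →* FreeGroup α := FreeGroup.lift (Pi.mulSingle i (FreeGroup.of i))
  have hfi : f (FreeGroup.of i) = FreeGroup.of i := by simp [f]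
  have hfj : f (FreeGroup.of j) = 1 := by simp [f, hij.symm]
  have hf : f ≠ 1 := fun h => FreeGroup.of_ne_one i (by rw [← hfi, h, MonoidHom.one_apply])
  exact not_isOfFinOrder_of_isMulTorsionFree (FreeGroup.of_ne_one j)
    (isOfFinOrder_of_map_eq_one_of_isCyclic_of_index_ne_zero hH hf hfj)

theorem isSolvable_of_quotient_mulEquiv {G Q : Type*} [Group G] [Group Q] {N : Subgroup G}
    [N.Normal] [Group.IsSolvable N] [Group.IsSolvable Q] (e : G ⧸ N ≃* Q) : Group.IsSolvable G := by
  have : Group.IsSolvable (G ⧸ N) :=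
    Group.isSolvable_of_isSolvable_injective (f := e.toMonoidHom) e.injective
  exact (Group.isSolvable_iff_subgroup_quotient N).2 ⟨‹_›, this⟩

theorem stmt8_general {G α : Type*} [Group G] [Group.IsSolvable G] [Nontrivial α]
    (φ : G →* FreeGroup α) : φ.range.index = 0 := by
  have : Group.IsSolvable φ.range := Group.isSolvable_of_surjective φ.rangeRestrict_surjective
  have : IsCyclic φ.range := isCyclic_of_isFreeGroup_of_isSolvable φ.range
  exact index_eq_zero_of_isCyclic_subgroup_freeGroup φ.range

/-- Nil³ argument: if `G` has a central element `z` of infinite order with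
`G ⧸ zpowers z ≅ ℤ × ℤ`, then no homomorphism `G → F_p` (`p ≥ 2`) has
finite-index range. -/
theorem stmt8 {G : Type*} [Group G] (z : G)
    (hzord : ¬ IsOfFinOrder z) (hzc : z ∈ Subgroup.center G)
    [hnorm : (Subgroup.zpowers z).Normal]
    (hq : Nonempty ((G ⧸ Subgroup.zpowers z) ≃* Multiplicative (ℤ × ℤ)))
    (p : ℕ) (hp : 2 ≤ p) :
    ¬ ∃ φ : G →* FreeGroup (Fin p), φ.range.index ≠ 0 := by
  have : Nontrivial (Fin p) := Fin.nontrivial_iff_two_le.2 hp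
  have : Group.IsSolvable (Subgroup.zpowers z) := Group.isSolvable_of_comm mul_comm'
  have : Group.IsSolvable G := isSolvable_of_quotient_mulEquiv hq.some
  exact fun ⟨φ, hφ⟩ => hφ (stmt8_general φ)
end

section
/- Let G be a group containing a subgroup of finite index isomorphic to ℤ³ = (Fin 3 → ℤ). Then for every natural number p ≥ 2, there is no surjective group homomorphism from G onto FreeGroup (Fin p). -/
/-!
Roots in a free group are unique: `x ^ n = y ^ n` with `n ≠ 0` forces `x = y`. Applied to `a` and
its conjugate by `b`, this shows that `a` and `b` commute as soon as some positive powers of them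
do. Every element has a positive power in a given subgroup of finite index, so a free group with a
commutative subgroup of finite index is itself commutative. A surjective homomorphism maps a
commutative subgroup of finite index to another one, but distinct free generators do not commute.
-/

section TorsionFree

variable {H : Type*} [Group H] [IsMulTorsionFree H]

theorem commute_pow_left_iff {a b : H} {n : ℕ} (hn : n ≠ 0) :
    Commute (a ^ n) b ↔ Commute a b := by
  refine ⟨fun h ↦ ?_, fun h ↦ h.pow_left n⟩
  have conj_pow_eq : (b * a * b⁻¹) ^ n = a ^ n := by
    rw [conj_pow, h.symm.mul_inv_cancel]
  have conj_eq : b * a * b⁻¹ = a := (pow_left_inj hn).mp conj_pow_eq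
  exact (mul_inv_eq_iff_eq_mul.mp conj_eq).symm

theorem commute_pow_pow_iff {a b : H} {m n : ℕ} (hm : m ≠ 0) (hn : n ≠ 0) :
    Commute (a ^ m) (b ^ n) ↔ Commute a b := by
  rw [commute_pow_left_iff hm, Commute.symm_iff, commute_pow_left_iff hn, Commute.symm_iff]

theorem isMulCommutative_of_index_ne_zero (K : Subgroup H) [IsMulCommutative K]
    (hK : K.index ≠ 0) : IsMulCommutative H := by
  refine isMulCommutative_iff.mpr fun a b ↦ ?_
  obtain ⟨m, hm, -, ham⟩ := Subgroup.exists_pow_mem_of_index_ne_zero hK a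
  obtain ⟨n, hn, -, hbn⟩ := Subgroup.exists_pow_mem_of_index_ne_zero hK b
  have powers_commute : Commute (a ^ m) (b ^ n) := setLike_mul_comm ham hbn
  exact (commute_pow_pow_iff hm.ne' hn.ne').mp powers_commute

end TorsionFree

section FreeGroup

variable {α : Type*}

theorem commute_freeGroup_of_iff {i j : α} :
    Commute (FreeGroup.of i) (FreeGroup.of j) ↔ i = j := by
  classical
  refine ⟨fun h ↦ ?_, by rintro rfl; rfl⟩
  have words_eq : [(i, true), (j, true)] = [(j, true), (i, true)] := by
    simpa [FreeGroup.of] using congrArg FreeGroup.toWord h.eq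
  exact congrArg Prod.fst (List.cons.inj words_eq).1

theorem not_isMulCommutative_freeGroup [Nontrivial α] : ¬ IsMulCommutative (FreeGroup α) := by
  intro h
  obtain ⟨i, j, hij⟩ := exists_pair_ne α
  exact hij (commute_freeGroup_of_iff.mp (mul_comm' _ _))

end FreeGroup

theorem stmt9_general {G α : Type*} [Group G] [Nontrivial α] (K : Subgroup G)
    [IsMulCommutative K] (hK : K.index ≠ 0) :
    ¬ ∃ φ : G →* FreeGroup α, Function.Surjective φ := by
  rintro ⟨φ, hφ⟩
  have map_index : (K.map φ).index ≠ 0 := ne_zero_of_dvd_ne_zero hK (K.index_map_dvd hφ)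
  exact not_isMulCommutative_freeGroup (isMulCommutative_of_index_ne_zero (K.map φ) map_index)

/-- ℝ³ argument: a group containing a finite-index subgroup isomorphic to `ℤ³`
admits no surjection onto a free group on `p ≥ 2` generators. -/
theorem stmt9 {G : Type*} [Group G] (K : Subgroup G) (hK : K.index ≠ 0)
    (e : K ≃* Multiplicative (Fin 3 → ℤ)) (p : ℕ) (hp : 2 ≤ p) :
    ¬ ∃ φ : G →* FreeGroup (Fin p), Function.Surjective φ := by
  have : Nontrivial (Fin p) := Fin.nontrivial_iff_two_le.mpr hp
  have : IsMulCommutative K := ⟨⟨fun a b ↦ e.injective (by simp only [map_mul, mul_comm])⟩⟩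
  exact stmt9_general K hK
end
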